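/- arXiv:2108.07551 — 2 statements merged into one kernel-verified Lean document; each statement's English description precedes it below -/
import Mathlib

section
/- If H is a minimal triangulation of a finite simple graph G, then every minimal separator of H is a minimal separator of G. -/
/-- A tree-decomposition of a graph `G` indexed by nodes of type `ι`. -/
structure TreeDecomp {V : Type} (G : SimpleGraph V) (ι : Type) where
  tree : SimpleGraph ι
  isTree : tree.IsTree
  bag : ι → Finset V
  bags_cover : ∀ v : V, ∃ i : ι, v ∈ bag i
  edges_covered : ∀ ⦃u v : V⦄, G.Adj u v → ∃ i : ι, u ∈ bag i ∧ v ∈ bag i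
  bags_connected : ∀ v : V, (tree.induce {i : ι | v ∈ bag i}).Connected

/-- The treewidth of `G`: the smallest `k` such that `G` has a tree-decomposition
all of whose bags have at most `k + 1` vertices (i.e. of width at most `k`). -/
noncomputable def treewidth {V : Type} (G : SimpleGraph V) : ℕ :=
  sInf { k : ℕ | ∃ (ι : Type) (td : TreeDecomp G ι), ∀ i : ι, (td.bag i).card ≤ k + 1 }

/-- The neighborhood `N_G(C)` of a vertex set `C`. -/
def nbhd {V : Type} (G : SimpleGraph V) (C : Set V) : Set V :=
  {v : V | v ∉ C ∧ ∃ u ∈ C, G.Adj u v}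

/-- `S` separates `a` from `b` in `G`: `a, b ∉ S` and every walk from `a` to `b` meets `S`
(so `a` and `b` lie in distinct components of `G` minus `S`). -/
def Separates {V : Type} (G : SimpleGraph V) (S : Set V) (a b : V) : Prop :=
  a ∉ S ∧ b ∉ S ∧ ∀ p : G.Walk a b, ∃ v ∈ p.support, v ∈ S

/-- `C` is a connected component of `G` minus `S`. -/
def IsCompOf {V : Type} (G : SimpleGraph V) (S : Set V) (C : Set V) : Prop :=
  C.Nonempty ∧ Disjoint C S ∧ (G.induce C).Connected ∧
    ∀ D : Set V, C ⊆ D → Disjoint D S → (G.induce D).Connected → D = C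

/-- `S` is a separator of `G`: `G` minus `S` has more than one connected component. -/
def IsSeparator {V : Type} (G : SimpleGraph V) (S : Set V) : Prop :=
  ∃ C D : Set V, IsCompOf G S C ∧ IsCompOf G S D ∧ C ≠ D

/-- `C` is a full component of `S` in `G`. -/
def IsFullCompOf {V : Type} (G : SimpleGraph V) (S : Set V) (C : Set V) : Prop :=
  IsCompOf G S C ∧ nbhd G C = S

/-- `S` is a minimal separator of `G`: it has at least two full components. -/
def IsMinSep {V : Type} (G : SimpleGraph V) (S : Set V) : Prop :=
  ∃ C D : Set V, IsFullCompOf G S C ∧ IsFullCompOf G S D ∧ C ≠ D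

/-- `R` crosses `S` if `R` separates some pair of vertices of `S`. -/
def Crosses {V : Type} (G : SimpleGraph V) (R S : Set V) : Prop :=
  ∃ a b : V, a ∈ S ∧ b ∈ S ∧ Separates G R a b

/-- `G` is chordal: every cycle with more than 3 vertices has a chord. -/
def IsChordal {V : Type} (G : SimpleGraph V) : Prop :=
  ∀ ⦃v : V⦄ (c : G.Walk v v), c.IsCycle → 3 < c.length →
    ∃ u w : V, u ∈ c.support ∧ w ∈ c.support ∧ G.Adj u w ∧ s(u, w) ∉ c.edges

/-- `H` is a triangulation of `G`. -/
def IsTriangulationOf {V : Type} (H G : SimpleGraph V) : Prop :=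
  IsChordal H ∧ G ≤ H

/-- `H` is a minimal triangulation of `G`. -/
def IsMinimalTriangulationOf {V : Type} (H G : SimpleGraph V) : Prop :=
  IsTriangulationOf H G ∧ ∀ H' : SimpleGraph V, IsTriangulationOf H' G → H' ≤ H → H' = H

/-- `K(S)`: the graph on the same vertex type whose edges join all pairs of
distinct vertices of `S`. -/
def completeOn {V : Type} (S : Set V) : SimpleGraph V :=
  SimpleGraph.fromRel (fun a b => a ∈ S ∧ b ∈ S)

/-- `s` is a maximal clique of `G`. -/
def IsMaximalClique {V : Type} (G : SimpleGraph V) (s : Set V) : Prop :=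
  G.IsClique s ∧ ∀ t : Set V, G.IsClique t → s ⊆ t → s = t

/-- `fill G td`: fill every bag of the tree-decomposition `td` into a clique. -/
def fill {V ι : Type} (G : SimpleGraph V) (td : TreeDecomp G ι) : SimpleGraph V :=
  G ⊔ SimpleGraph.fromRel (fun a b => ∃ i : ι, a ∈ td.bag i ∧ b ∈ td.bag i)

/-- The nodes of the maximal subtree `T(i,j)` of the tree containing `i` but not `j`
(for adjacent `i`, `j`): the nodes reachable from `i` after deleting the edge `{i, j}`. -/
def sideNodes {V ι : Type} {G : SimpleGraph V} (td : TreeDecomp G ι) (i j : ι) : Set ι :=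
  {t : ι | (td.tree.deleteEdges {s(i, j)}).Reachable i t}

/-- `V(i,j)`: the union of the bags of nodes in `T(i,j)`, with the vertices of the
bag of `j` removed. -/
def sideVerts {V ι : Type} {G : SimpleGraph V} (td : TreeDecomp G ι) (i j : ι) : Set V :=
  (⋃ t ∈ sideNodes td i j, (td.bag t : Set V)) \ (td.bag j : Set V)

/-- A perfect elimination order of `G`. -/
def IsPerfectElimOrder {V : Type} [Fintype V] (G : SimpleGraph V)
    (e : Fin (Fintype.card V) ≃ V) : Prop :=
  ∀ i : Fin (Fintype.card V),
    G.IsClique {u : V | G.Adj (e i) u ∧ ∃ j : Fin (Fintype.card V), i < j ∧ e j = u}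

/-- `H` is a minor of `G`, via the branch-set (minor model) characterization. -/
def IsMinorOf {W V : Type} (H : SimpleGraph W) (G : SimpleGraph V) : Prop :=
  ∃ B : W → Set V,
    (∀ w : W, (B w).Nonempty) ∧
    (∀ w : W, (G.induce (B w)).Connected) ∧
    (Pairwise fun w₁ w₂ : W => Disjoint (B w₁) (B w₂)) ∧
    ∀ ⦃w₁ w₂ : W⦄, H.Adj w₁ w₂ → ∃ a ∈ B w₁, ∃ b ∈ B w₂, G.Adj a b

/-- There is a clique minor of `G` minus `C` rooted on `R`, given by branch sets
`B v ∋ v` for `v ∈ R`: disjoint from `C`, pairwise disjoint, each connected, with an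
edge of `G` between every two of them. -/
def HasCliqueMinorRootedAvoiding {V : Type} (G : SimpleGraph V) (R C : Set V) : Prop :=
  ∃ B : R → Set V,
    (∀ v : R, (v : V) ∈ B v) ∧
    (∀ v : R, Disjoint (B v) C) ∧
    (∀ v : R, (G.induce (B v)).Connected) ∧
    (∀ u v : R, u ≠ v → Disjoint (B u) (B v)) ∧
    (∀ u v : R, u ≠ v → ∃ a ∈ B u, ∃ b ∈ B v, G.Adj a b)

/-- `S` is a minor-safe separator of `G`: for every component `C` of `G` minus `S`,
there is a clique minor of `G` minus `C` rooted on `N_G(C)`. -/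
def MinorSafe {V : Type} (G : SimpleGraph V) (S : Set V) : Prop :=
  ∀ C : Set V, IsCompOf G S C → HasCliqueMinorRootedAvoiding G (nbhd G C) C

/-!
Removing from `H` the edges that join a set `A` to vertices outside `A ∪ T` preserves chordality
when `T` is a clique of `H`: a cycle that used to have one of these edges as a chord passes through
`T` on both of its arcs, and the edge between the two crossing points is a chord that survives.
Hence, in a minimal triangulation `H` of `G`, every set whose `G`-neighborhood is a clique of `H`
has the same neighborhood in `G` and in `H`. By Dirac's theorem a minimal separator `S` of `H` is a
clique, so this applies to a full component `C` of `S` and to all unions of components of `G[C]`: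
the former shows that `C` is still full in `G`, the latter that `G[C]` is connected.
-/

open SimpleGraph

section Chordless

variable {V W : Type*} {G : SimpleGraph V} {u v : V}

lemma isChordless_of_length_eq_dist {p : G.Walk u v} (hp : p.length = G.dist u v) :
    p.IsChordless := by
  classical
  have mem_edges_of_isSubwalk : ∀ {x y : V} (q : G.Walk x y), q.IsSubwalk p → G.Adj x y →
      s(x, y) ∈ p.edges := by
    intro x y q hqp hxy
    have hq : q.length = 1 := (length_eq_dist_of_subwalk hp hqp).trans (dist_eq_one_iff_adj.mpr hxy)
    apply hqp.edges_subset
    match q, hq with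
    | .cons _ .nil, _ => simp
  refine Walk.isChordless_iff_forall_mem_edges.mpr fun x y hx hy hxy => ?_
  rw [← p.take_spec hx, Walk.mem_support_append_iff] at hy
  rcases hy with hy | hy
  · rw [Sym2.eq_swap]
    exact mem_edges_of_isSubwalk _
      ((Walk.isSubwalk_dropUntil _ hy).trans (p.isSubwalk_takeUntil hx)) hxy.symm
  · exact mem_edges_of_isSubwalk _
      ((Walk.isSubwalk_takeUntil _ hy).trans (p.isSubwalk_dropUntil hx)) hxy

lemma isChordless_map_embedding {G' : SimpleGraph W} {p : G.Walk u v} (hp : p.IsChordless)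
    (f : G ↪g G') : (p.map f.toHom).IsChordless := by
  refine Walk.isChordless_iff_forall_mem_edges.mpr fun x y hx hy hxy => ?_
  rw [Walk.support_map, List.mem_map] at hx hy
  obtain ⟨x, hx, rfl⟩ := hx
  obtain ⟨y, hy, rfl⟩ := hy
  rw [Walk.edges_map]
  exact List.mem_map_of_mem (hp.mem_edges hx hy (f.map_adj_iff.mp hxy))

lemma isChordless_append {w : V} {p : G.Walk u v} {q : G.Walk v w}
    (hp : p.IsChordless) (hq : q.IsChordless)
    (hpq : ∀ x ∈ p.support, ∀ y ∈ q.support, G.Adj x y → x ∈ q.support ∨ y ∈ p.support) :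
    (p.append q).IsChordless := by
  have mem_edges_of_mem_of_mem : ∀ x ∈ p.support, ∀ y ∈ q.support, G.Adj x y →
      s(x, y) ∈ p.edges ∨ s(x, y) ∈ q.edges := fun x hx y hy hxy =>
    (hpq x hx y hy hxy).symm.imp (hp.mem_edges hx · hxy) (hq.mem_edges · hy hxy)
  refine Walk.isChordless_iff_forall_mem_edges.mpr fun x y hx hy hxy => ?_
  rw [Walk.mem_support_append_iff] at hx hy
  rw [Walk.edges_append, List.mem_append]
  rcases hx with hx | hx <;> rcases hy with hy | hy
  · exact .inl (hp.mem_edges hx hy hxy)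
  · exact mem_edges_of_mem_of_mem x hx y hy hxy
  · rw [Sym2.eq_swap]
    exact mem_edges_of_mem_of_mem y hy x hx hxy.symm
  · exact .inr (hq.mem_edges hx hy hxy)

lemma exists_isPath_isChordless_of_connected_induce {P : Set V} (hP : (G.induce P).Connected)
    (hu : u ∈ P) (hv : v ∈ P) :
    ∃ p : G.Walk u v, p.IsPath ∧ p.IsChordless ∧ ∀ x ∈ p.support, x ∈ P := by
  obtain ⟨p, hp, hdist⟩ := hP.exists_path_of_dist ⟨u, hu⟩ ⟨v, hv⟩
  let f := Embedding.induce (G := G) P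
  refine ⟨p.map f.toHom, hp.map f.injective,
    isChordless_map_embedding (isChordless_of_length_eq_dist hdist) f, fun x hx => ?_⟩
  obtain ⟨y, -, rfl⟩ := List.mem_map.mp (Walk.support_map f.toHom p ▸ hx)
  exact y.2

lemma start_notMem_tail_support {p : G.Walk u v} (hp : p.IsPath) : u ∉ p.support.tail := by
  have hnodup := hp.support_nodup
  rw [← p.cons_tail_support] at hnodup
  exact (List.nodup_cons.mp hnodup).1

lemma exists_arcs_of_isCycle {c : G.Walk v v} (hc : c.IsCycle) {a b : V}
    (ha : a ∈ c.support) (hb : b ∈ c.support) :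
    ∃ (p : G.Walk a b) (q : G.Walk b a), p.support ⊆ c.support ∧ q.support ⊆ c.support ∧
      (∀ e, e ∈ c.edges ↔ e ∈ p.edges ∨ e ∈ q.edges) ∧
      ∀ x ∈ p.support, x ∈ q.support → x = a ∨ x = b := by
  classical
  have hb' : b ∈ (c.rotate a ha).support := (c.mem_support_rotate_iff a ha).mpr hb
  obtain ⟨p, q, hpq⟩ := Walk.mem_support_iff_exists_append.mp hb'
  have support_iff (x : V) : x ∈ c.support ↔ x ∈ p.support ∨ x ∈ q.support := by
    rw [← c.mem_support_rotate_iff a ha, hpq, Walk.mem_support_append_iff]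
  refine ⟨p, q, fun x hx => (support_iff x).mpr (.inl hx),
    fun x hx => (support_iff x).mpr (.inr hx), fun e => ?_, fun x hxp hxq => ?_⟩
  · rw [← (c.rotate_edges a ha).mem_iff, hpq, Walk.edges_append, List.mem_append]
  · have hnodup := (hc.rotate ha).support_nodup
    rw [hpq, Walk.tail_support_append, List.nodup_append'] at hnodup
    rw [Walk.mem_support_iff] at hxp hxq
    exact hxp.imp_right fun hxp => hxq.resolve_right (hnodup.2.2 hxp)

end Chordless

section Nbhd

variable {V : Type} {G : SimpleGraph V} {A C T : Set V}

lemma disjoint_nbhd (G : SimpleGraph V) (C : Set V) : Disjoint C (nbhd G C) :=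
  Set.disjoint_left.mpr fun _ hC hN => hN.1 hC

lemma nbhd_mono {H : SimpleGraph V} (hGH : G ≤ H) (C : Set V) : nbhd G C ⊆ nbhd H C :=
  fun _ ⟨hv, u, hu, huv⟩ => ⟨hv, u, hu, hGH huv⟩

lemma nbhd_subset_union_nbhd (G : SimpleGraph V) (hAC : A ⊆ C) : nbhd G A ⊆ C ∪ nbhd G C :=
  fun _ ⟨_, u, hu, huv⟩ => or_iff_not_imp_left.mpr fun hv => ⟨hv, u, hAC hu, huv⟩

lemma separates_of_nbhd_subset (hAT : Disjoint A T) (hN : nbhd G A ⊆ T) {a b : V}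
    (ha : a ∈ A) (hbA : b ∉ A) (hbT : b ∉ T) : Separates G T a b := by
  refine ⟨hAT.notMem_of_mem_left ha, hbT, fun p => ?_⟩
  obtain ⟨d, hd, hfst, hsnd⟩ := p.exists_boundary_dart A ha hbA
  exact ⟨d.snd, p.dart_snd_mem_support_of_mem_darts hd, hN ⟨hsnd, d.fst, hfst, d.adj⟩⟩

lemma connected_induce_iff_forall_subset :
    (G.induce C).Connected ↔
      C.Nonempty ∧ ∀ A ⊆ C, A.Nonempty → Disjoint (nbhd G A) C → A = C := by
  refine ⟨fun hC => ⟨Set.nonempty_coe_sort.mp hC.nonempty, ?_⟩, ?_⟩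
  · rintro A hAC ⟨a, ha⟩ hN
    refine hAC.antisymm fun c hc => by_contra fun hcA => ?_
    obtain ⟨p⟩ := hC.preconnected ⟨a, hAC ha⟩ ⟨c, hc⟩
    obtain ⟨d, -, hfst, hsnd⟩ := p.exists_boundary_dart (Subtype.val ⁻¹' A) ha hcA
    exact hN.notMem_of_mem_left ⟨hsnd, d.fst, hfst, d.adj⟩ d.snd.2
  · rintro ⟨⟨a, ha⟩, hC⟩
    rw [connected_iff_exists_forall_reachable]
    refine ⟨⟨a, ha⟩, fun x => ?_⟩
    let K := (G.induce C).connectedComponentMk ⟨a, ha⟩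
    have hK : Subtype.val '' K.supp = C := by
      refine hC _ (Subtype.coe_image_subset C _) (K.nonempty_supp.image _) ?_
      rw [Set.disjoint_left]
      rintro v ⟨hv, -, ⟨u, hu, rfl⟩, huv⟩ hvC
      exact hv ⟨⟨v, hvC⟩, K.mem_supp_of_adj_mem_supp hu huv, rfl⟩
    obtain ⟨y, hy, hyx⟩ : (x : V) ∈ Subtype.val '' K.supp := hK.symm ▸ x.2
    obtain rfl := Subtype.val_injective hyx
    exact (ConnectedComponent.exact hy).symm

lemma connected_induce_insert (hC : (G.induce C).Connected) {s : V} (hs : s ∈ nbhd G C) :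
    (G.induce (insert s C)).Connected := by
  obtain ⟨-, u, hu, hus⟩ := hs
  rw [Set.insert_eq]
  exact connected_induce_union (s := {s}) .of_subsingleton hC.preconnected rfl hu hus.symm

lemma exists_isPath_isChordless_through (hC : (G.induce C).Connected) {s t : V}
    (hs : s ∈ nbhd G C) (ht : t ∈ nbhd G C) :
    ∃ p : G.Walk s t, p.IsPath ∧ p.IsChordless ∧ ∀ x ∈ p.support, x = s ∨ x = t ∨ x ∈ C := by
  have htC := connected_induce_insert hC ht
  have hst : (G.induce (insert s (insert t C))).Connected := by
    rcases nbhd_subset_union_nbhd G (Set.subset_insert t C) hs with h | h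
    · rwa [Set.insert_eq_of_mem h]
    · exact connected_induce_insert htC h
  exact exists_isPath_isChordless_of_connected_induce hst (.inl rfl) (.inr (.inl rfl))

end Nbhd

section Chordal

variable {V : Type} {G H : SimpleGraph V} {A C D S T : Set V}

lemma isChordal_iff_forall_isChordless :
    IsChordal G ↔ ∀ ⦃v : V⦄ (c : G.Walk v v), c.IsCycle → c.IsChordless → c.length ≤ 3 := by
  refine forall₃_congr fun v c hc => ?_
  rw [← not_imp_not (b := c.IsChordless), not_le, Walk.isChordless_iff_forall_mem_edges]
  push Not
  rfl

lemma IsChordal.isClique_nbhd_inter_nbhd (hG : IsChordal G) (hC : (G.induce C).Connected)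
    (hD : (G.induce D).Connected) (hCD : Disjoint C D) (hND : Disjoint (nbhd G C) D) :
    G.IsClique (nbhd G C ∩ nbhd G D) := by
  rintro s ⟨hsC, hsD⟩ t ⟨htC, htD⟩ hst
  by_contra hadj
  obtain ⟨p, hp, hpchord, hpC⟩ := exists_isPath_isChordless_through hC hsC htC
  obtain ⟨q, hq, hqchord, hqD⟩ := exists_isPath_isChordless_through hD htD hsD
  have hplen : 1 < p.length :=
    (p.reachable.one_lt_dist_of_ne_of_not_adj hst hadj).trans_le (dist_le p)
  have hqlen : 1 < q.length :=
    (q.reachable.one_lt_dist_of_ne_of_not_adj hst.symm (hadj ·.symm)).trans_le (dist_le q)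
  have hcycle : (p.append q).IsCycle := by
    refine hp.isCycle_append hq (fun x hxp hxq => ?_) (.inl hplen)
    have hxs : x ≠ s := fun h => start_notMem_tail_support hp (h ▸ hxp)
    have hxt : x ≠ t := fun h => start_notMem_tail_support hq (h ▸ hxq)
    have hxC := ((hpC x (List.mem_of_mem_tail hxp)).resolve_left hxs).resolve_left hxt
    have hxD := ((hqD x (List.mem_of_mem_tail hxq)).resolve_left hxt).resolve_left hxs
    exact hCD.notMem_of_mem_left hxC hxD
  have hchordless : (p.append q).IsChordless := by
    refine isChordless_append hpchord hqchord fun x hx y hy hxy => ?_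
    rcases hpC x hx with rfl | rfl | hxC
    · exact .inl q.end_mem_support
    · exact .inl q.start_mem_support
    rcases hqD y hy with rfl | rfl | hyD
    · exact .inr p.end_mem_support
    · exact .inr p.start_mem_support
    exact absurd hyD (hND.notMem_of_mem_left ⟨hCD.notMem_of_mem_right hyD, x, hxC, hxy⟩)
  have := isChordal_iff_forall_isChordless.mp hG _ hcycle hchordless
  rw [Walk.length_append] at this
  lia

lemma IsCompOf.disjoint (hC : IsCompOf G S C) (hD : IsCompOf G S D) (hne : C ≠ D) :
    Disjoint C D := by
  obtain ⟨-, hCS, hCconn, hCmax⟩ := hC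
  obtain ⟨-, hDS, hDconn, hDmax⟩ := hD
  by_contra hCD
  have hconn := induce_union_connected hCconn.preconnected hDconn.preconnected
    (Set.not_disjoint_iff_nonempty_inter.mp hCD)
  have hdisj : Disjoint (C ∪ D) S := hCS.union_left hDS
  exact hne ((hCmax _ Set.subset_union_left hdisj hconn).symm.trans
    (hDmax _ Set.subset_union_right hdisj hconn))

lemma IsChordal.isClique_of_isMinSep (hG : IsChordal G) (hS : IsMinSep G S) : G.IsClique S := by
  obtain ⟨C, D, ⟨hC, hCS⟩, ⟨hD, hDS⟩, hne⟩ := hS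
  have hclique := hG.isClique_nbhd_inter_nbhd hC.2.2.1 hD.2.2.1 (hC.disjoint hD hne)
    (hCS ▸ hD.2.1.symm)
  rwa [hCS, hDS, Set.inter_self] at hclique

lemma Separates.not_isChordless {a b v : V} (hab : Separates G T a b) (hT : G.IsClique T)
    {c : G.Walk v v} (hc : c.IsCycle) (ha : a ∈ c.support) (hb : b ∈ c.support) :
    ¬ c.IsChordless := by
  intro hchordless
  obtain ⟨haT, hbT, hsep⟩ := hab
  obtain ⟨p, q, hpc, hqc, hedges, hpq⟩ := exists_arcs_of_isCycle hc ha hb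
  have notMem_inter : ∀ z ∈ p.support, z ∈ q.support → z ∉ T := by
    intro z hzp hzq
    rcases hpq z hzp hzq with rfl | rfl
    · exact haT
    · exact hbT
  obtain ⟨x, hxp, hxT⟩ := hsep p
  obtain ⟨y, hyq, hyT⟩ := hsep q.reverse
  rw [Walk.support_reverse, List.mem_reverse] at hyq
  have hxy : x ≠ y := fun h => notMem_inter x hxp (h ▸ hyq) hxT
  have hmem := hchordless.mem_edges (hpc hxp) (hqc hyq) (hT hxT hyT hxy)
  rcases (hedges _).mp hmem with h | h
  · exact notMem_inter y (p.snd_mem_support_of_mem_edges h) hyq hyT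
  · exact notMem_inter x hxp (q.fst_mem_support_of_mem_edges h) hxT

/-- The largest subgraph of `H` in which the neighborhood of `A` is contained in `T`: `H` without
its edges between `A` and the complement of `A ∪ T`. When `T` is the neighborhood of `A` in `G`, it
is the candidate for a smaller triangulation of `G`. -/
def cutOff (H : SimpleGraph V) (A T : Set V) : SimpleGraph V :=
  H \ H.between A (A ∪ T)ᶜ

lemma cutOff_adj {x y : V} : (cutOff H A T).Adj x y ↔
    H.Adj x y ∧ ¬ (x ∈ A ∧ y ∉ A ∪ T) ∧ ¬ (y ∈ A ∧ x ∉ A ∪ T) := by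
  simp only [cutOff, sdiff_adj, between_adj, Set.mem_compl_iff]
  tauto

lemma le_cutOff_iff : G ≤ cutOff H A T ↔ G ≤ H ∧ nbhd G A ⊆ T := by
  refine ⟨fun h => ⟨h.trans sdiff_le, ?_⟩, fun ⟨hGH, hN⟩ x y hxy => ?_⟩
  · rintro v ⟨hv, u, hu, huv⟩
    by_contra hvT
    exact (cutOff_adj.mp (h huv)).2.1 ⟨hu, fun hvAT => hvAT.elim hv hvT⟩
  · refine cutOff_adj.mpr ⟨hGH hxy, fun ⟨hx, hy⟩ => hy ?_, fun ⟨hy, hx⟩ => hx ?_⟩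
    · exact or_iff_not_imp_left.mpr fun hyA => hN ⟨hyA, x, hx, hxy⟩
    · exact or_iff_not_imp_left.mpr fun hxA => hN ⟨hxA, y, hy, hxy.symm⟩

lemma IsChordal.isChordal_cutOff (hH : IsChordal H) (hAT : Disjoint A T) (hT : H.IsClique T) :
    IsChordal (cutOff H A T) := by
  obtain ⟨hle, hN⟩ := le_cutOff_iff.mp (le_refl (cutOff H A T))
  have hT' : (cutOff H A T).IsClique T := fun x hx y hy hxy =>
    cutOff_adj.mpr ⟨hT hx hy hxy, fun h => h.2 (.inr hy), fun h => h.2 (.inr hx)⟩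
  rw [isChordal_iff_forall_isChordless] at hH ⊢
  intro v c hc hchordless
  have subset_of_mem {a b : V} (ha : a ∈ c.support) (hb : b ∈ c.support) (haA : a ∈ A) :
      b ∈ A ∪ T := by
    by_contra hbAT
    have hsep := separates_of_nbhd_subset hAT hN haA (hbAT <| .inl ·) (hbAT <| .inr ·)
    exact hsep.not_isChordless hT' hc ha hb hchordless
  have hchordlessH : (c.mapLe hle).IsChordless := by
    refine Walk.isChordless_iff_forall_mem_edges.mpr fun x y hx hy hxy => ?_
    rw [Walk.support_mapLe_eq_support] at hx hy
    rw [Walk.edges_mapLe_eq_edges]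
    exact hchordless.mem_edges hx hy (cutOff_adj.mpr ⟨hxy,
      fun h => h.2 (subset_of_mem hx hy h.1), fun h => h.2 (subset_of_mem hy hx h.1)⟩)
  simpa only [Walk.length_mapLe] using hH _ (hc.mapLe hle) hchordlessH

end Chordal

namespace IsMinimalTriangulationOf

variable {V : Type} {G H : SimpleGraph V} {A C S : Set V}

lemma nbhd_eq (hH : IsMinimalTriangulationOf H G) (hA : H.IsClique (nbhd G A)) :
    nbhd H A = nbhd G A := by
  obtain ⟨⟨hchordal, hGH⟩, hmin⟩ := hH
  have hcut : cutOff H A (nbhd G A) = H :=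
    hmin _ ⟨hchordal.isChordal_cutOff (disjoint_nbhd G A) hA, le_cutOff_iff.mpr ⟨hGH, subset_rfl⟩⟩
      sdiff_le
  exact (le_cutOff_iff.mp hcut.ge).2.antisymm (nbhd_mono hGH A)

lemma connected_induce (hH : IsMinimalTriangulationOf H G) (hC : (H.induce C).Connected)
    (hN : H.IsClique (nbhd H C)) : (G.induce C).Connected := by
  rw [connected_induce_iff_forall_subset] at hC ⊢
  refine ⟨hC.1, fun A hAC hA hdisj => hC.2 A hAC hA ?_⟩
  have hGN : nbhd G A ⊆ nbhd H C := fun v hv =>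
    nbhd_mono hH.1.2 C <|
      (nbhd_subset_union_nbhd G hAC hv).resolve_left (hdisj.notMem_of_mem_left hv)
  rwa [hH.nbhd_eq (hN.subset hGN)]

lemma isFullCompOf (hH : IsMinimalTriangulationOf H G) (hS : H.IsClique S)
    (hC : IsFullCompOf H S C) : IsFullCompOf G S C := by
  obtain ⟨⟨hne, hdisj, hconn, hmax⟩, rfl⟩ := hC
  have hGH := hH.1.2
  exact ⟨⟨hne, hdisj, hH.connected_induce hconn hS,
      fun D hCD hD hDconn => hmax D hCD hD (hDconn.mono (comap_monotone _ hGH))⟩,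
    (hH.nbhd_eq (hS.subset (nbhd_mono hGH C))).symm⟩

end IsMinimalTriangulationOf

theorem minSep_of_minimalTriangulation_general {V : Type} {G H : SimpleGraph V}
    (hH : IsMinimalTriangulationOf H G) {S : Set V} (hS : IsMinSep H S) : IsMinSep G S := by
  have hclique : H.IsClique S := hH.1.1.isClique_of_isMinSep hS
  obtain ⟨C, D, hC, hD, hne⟩ := hS
  exact ⟨C, D, hH.isFullCompOf hclique hC, hH.isFullCompOf hclique hD, hne⟩

/-- every minimal separator of a minimal triangulation `H` of `G`
is a minimal separator of `G`. -/
theorem minSep_of_minimalTriangulation {V : Type} [Fintype V]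
    (G H : SimpleGraph V) (hH : IsMinimalTriangulationOf H G)
    (S : Set V) (hS : IsMinSep H S) :
    IsMinSep G S :=
  minSep_of_minimalTriangulation_general hH hS
end

section
/- Let T be a clique-separator decomposition of a finite simple graph G. Then tw(G) is the maximum of tw(A), where A ranges over all the atoms of T (the subgraphs of G induced by the bags of T). -/
/-!
Every finite clique lies in a bag of every tree-decomposition: add its vertices one at a time, each
time moving from the current node to the nearest node whose bag contains the new vertex. Hence, for
adjacent nodes `i` and `j` of `T`, every tree-decomposition of the atom `G[X_i]` has a bag that
contains the clique `X_i ∩ X_j`. Replacing each node of `T` by an optimal tree-decomposition of its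
atom, and each edge `ij` of `T` by a link between two bags containing `X_i ∩ X_j`, gives a
tree-decomposition of `G` all of whose bags are bags of the chosen ones. The glued graph is a tree
because its links are bridges, so that a cycle would have to stay in one of the chosen trees.
-/

section Bridges

variable {V W : Type*} {G G' : SimpleGraph V} {H : SimpleGraph W}

theorem isBridge_of_forall_adj_reachable (f : W → V) {p q : W}
    (hf : ∀ u v, H.Adj u v → s(u, v) ≠ s(p, q) →
      (G.deleteEdges {s(f p, f q)}).Reachable (f u) (f v))
    (hpq : G.IsBridge s(f p, f q)) : H.IsBridge s(p, q) := by
  rw [SimpleGraph.isBridge_iff] at hpq ⊢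
  rw [SimpleGraph.reachable_iff_reflTransGen] at hpq ⊢
  refine fun h => hpq (h.lift' f fun u v huv => ?_)
  rw [SimpleGraph.deleteEdges_adj] at huv
  exact (SimpleGraph.reachable_iff_reflTransGen _ _).mp (hf u v huv.1 huv.2)

theorem isAcyclic_of_forall_isBridge (hG' : G'.IsAcyclic)
    (h : ∀ u v, G.Adj u v → ¬ G'.Adj u v → G.IsBridge s(u, v)) : G.IsAcyclic := by
  intro v c hc
  have hmem : ∀ e ∈ c.edges, e ∈ G'.edgeSet := by
    rintro ⟨u, w⟩ he
    by_contra hn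
    exact (h u w (c.adj_of_mem_edges he) hn).notMem_edges_of_isCycle hc he
  exact hG' _ (hc.transfer hmem)

end Bridges

section Gates

variable {V : Type*} {T : SimpleGraph V} {S : Set V}

/-- `j` is a gate of the vertex set `S` for the vertex `i`: a vertex of `S` through which every
walk from `i` to `S` passes. -/
def IsGate (T : SimpleGraph V) (S : Set V) (i j : V) : Prop :=
  j ∈ S ∧ ∀ t ∈ S, ∀ p : T.Walk i t, j ∈ p.support

theorem exists_walk_support_subset {u v : S} (h : (T.induce S).Reachable u v) :
    ∃ p : T.Walk u v, ∀ x ∈ p.support, x ∈ S := by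
  obtain ⟨p⟩ := h
  refine ⟨p.map (SimpleGraph.Embedding.induce S).toHom, fun x hx => ?_⟩
  obtain ⟨y, -, rfl⟩ := List.mem_map.mp (SimpleGraph.Walk.support_map _ p ▸ hx)
  exact y.2

theorem isGate_of_isBridge (hS : (T.induce S).Preconnected) {i j : V}
    (hij : T.IsBridge s(i, j)) (hi : i ∉ S) (hj : j ∈ S) : IsGate T S i j := by
  refine ⟨hj, fun t ht p => ?_⟩
  obtain ⟨q, hq⟩ := exists_walk_support_subset (hS ⟨t, ht⟩ ⟨j, hj⟩)
  have hedge : s(i, j) ∈ (p.append q).edges :=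
    SimpleGraph.isBridge_iff_forall_walk_mem_edges.mp hij _
  rw [SimpleGraph.Walk.edges_append, List.mem_append] at hedge
  rcases hedge with hp | hq'
  · exact p.snd_mem_support_of_mem_edges hp
  · exact absurd (hq i (q.fst_mem_support_of_mem_edges hq')) hi

theorem exists_isGate (hT : T.IsAcyclic) (hS : (T.induce S).Preconnected) {i s : V}
    (his : T.Reachable i s) (hs : s ∈ S) : ∃ j, IsGate T S i j := by
  obtain ⟨p⟩ := his
  induction p with
  | nil => exact ⟨_, hs, fun _ _ p => p.start_mem_support⟩
  | @cons i k _ hik _ ih =>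
    by_cases hi : i ∈ S
    · exact ⟨i, hi, fun _ _ p => p.start_mem_support⟩
    by_cases hk : k ∈ S
    · exact ⟨k, isGate_of_isBridge hS
        (SimpleGraph.isAcyclic_iff_forall_adj_isBridge.mp hT hik) hi hk⟩
    obtain ⟨j, hj, hgate⟩ := ih hs
    refine ⟨j, hj, fun t ht p => ?_⟩
    have hmem : j ∈ (p.cons hik.symm).support := hgate t ht _
    rw [SimpleGraph.Walk.support_cons, List.mem_cons] at hmem
    exact hmem.resolve_left fun h => hk (h ▸ hj)

end Gates

theorem connected_of_forall_fiber_reachable {V W : Type*} {T : SimpleGraph V} {H : SimpleGraph W}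
    (hT : T.Connected) (f : W → V) (hf : Function.Surjective f)
    (hfiber : ∀ p q, f p = f q → H.Reachable p q)
    (hadj : ∀ u v, T.Adj u v → ∃ p q, f p = u ∧ f q = v ∧ H.Reachable p q) : H.Connected := by
  have hwalk : ∀ {u v}, T.Walk u v → ∀ p q, f p = u → f q = v → H.Reachable p q := by
    intro u v w
    induction w with
    | nil => exact fun p q hp hq => hfiber p q (hp.trans hq.symm)
    | cons huv _ ih =>
      intro p q hp hq
      obtain ⟨p', q', hp', hq', hpq⟩ := hadj _ _ huv
      exact (hfiber p p' (hp.trans hp'.symm)).trans (hpq.trans (ih q' q hq' hq))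
  have : Nonempty W := hT.nonempty.map (Function.surjInv hf)
  exact .mk fun p q => (hT.preconnected (f p) (f q)).elim fun w => hwalk w p q rfl rfl

section Glue

variable {ι : Type*} {κ : ι → Type*} {T : SimpleGraph ι} {F : ∀ i, SimpleGraph (κ i)}
  {a : ∀ i, ι → κ i}

/-- The adjacency relation of `glueGraph T F a`. -/
inductive GlueAdj (T : SimpleGraph ι) (F : ∀ i, SimpleGraph (κ i)) (a : ∀ i, ι → κ i) :
    (Σ i, κ i) → (Σ i, κ i) → Prop
  | fiber {i : ι} {x y : κ i} (h : (F i).Adj x y) : GlueAdj T F a ⟨i, x⟩ ⟨i, y⟩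
  | link {i j : ι} (h : T.Adj i j) : GlueAdj T F a ⟨i, a i j⟩ ⟨j, a j i⟩

/-- The graph obtained from `T` by replacing every vertex `i` by the graph `F i`, and every edge
`ij` by an edge between the vertex `a i j` of `F i` and the vertex `a j i` of `F j`. The value of
`a i j` is irrelevant when `i` and `j` are not adjacent in `T`. -/
def glueGraph (T : SimpleGraph ι) (F : ∀ i, SimpleGraph (κ i)) (a : ∀ i, ι → κ i) :
    SimpleGraph (Σ i, κ i) where
  Adj := GlueAdj T F a
  symm.symm _ _
    | .fiber h => .fiber h.symm
    | .link h => .link h.symm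
  loopless.irrefl := by
    suffices ∀ p q, GlueAdj T F a p q → p ≠ q from fun p h => this p p h rfl
    rintro _ _ (h | h) heq
    · exact h.ne (eq_of_heq (Sigma.mk.inj heq).2)
    · exact h.ne (Sigma.mk.inj heq).1

theorem isBridge_glueGraph_link {i j : ι} (hij : T.IsBridge s(i, j)) :
    (glueGraph T F a).IsBridge s(⟨i, a i j⟩, ⟨j, a j i⟩) := by
  refine isBridge_of_forall_adj_reachable Sigma.fst ?_ hij
  rintro _ _ (_ | @⟨k, l, hkl⟩) hne
  · exact .rfl
  · refine (SimpleGraph.deleteEdges_adj.mpr ⟨hkl, fun heq => hne ?_⟩).reachable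
    obtain ⟨rfl, rfl⟩ | ⟨rfl, rfl⟩ := Sym2.eq_iff.mp heq
    · rfl
    · exact Sym2.eq_swap

theorem isAcyclic_glueGraph_bot (hF : ∀ i, (F i).IsAcyclic) : (glueGraph ⊥ F a).IsAcyclic := by
  classical
  rw [SimpleGraph.isAcyclic_iff_forall_adj_isBridge]
  rintro _ _ (@⟨i, x, y, hxy⟩ | h)
  swap
  · exact h.elim
  let retract : (Σ i, κ i) → κ i := fun p => if h : p.1 = i then h ▸ p.2 else x
  have hretract : ∀ z, retract ⟨i, z⟩ = z := fun z => dif_pos rfl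
  refine isBridge_of_forall_adj_reachable (G := F i) retract ?_ ?_
  · rintro _ _ (@⟨j, z, w, hzw⟩ | h) hne
    swap
    · exact h.elim
    by_cases hj : j = i
    · subst hj
      simp only [hretract]
      refine (SimpleGraph.deleteEdges_adj.mpr ⟨hzw, fun heq => hne ?_⟩).reachable
      exact congrArg (Sym2.map (Sigma.mk j)) heq
    · simp only [retract, dif_neg hj, SimpleGraph.Reachable.rfl]
  · simpa only [hretract] using SimpleGraph.isAcyclic_iff_forall_adj_isBridge.mp (hF i) hxy

theorem isAcyclic_glueGraph (hT : T.IsAcyclic) (hF : ∀ i, (F i).IsAcyclic) :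
    (glueGraph T F a).IsAcyclic := by
  refine isAcyclic_of_forall_isBridge (isAcyclic_glueGraph_bot (a := a) hF) ?_
  rintro _ _ (hxy | hij) hnot
  · exact absurd (.fiber hxy) hnot
  · exact isBridge_glueGraph_link (SimpleGraph.isAcyclic_iff_forall_adj_isBridge.mp hT hij)

theorem connected_glueGraph (hT : T.Connected) (hF : ∀ i, (F i).Connected) :
    (glueGraph T F a).Connected := by
  refine connected_of_forall_fiber_reachable hT Sigma.fst ?_ ?_ fun i j h =>
    ⟨⟨i, a i j⟩, ⟨j, a j i⟩, rfl, rfl, SimpleGraph.Adj.reachable (GlueAdj.link h)⟩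
  · exact fun i => ⟨⟨i, (hF i).nonempty.some⟩, rfl⟩
  · rintro ⟨i, x⟩ ⟨_, y⟩ rfl
    exact ((hF i).preconnected x y).map ⟨Sigma.mk i, GlueAdj.fiber⟩

theorem isTree_glueGraph (hT : T.IsTree) (hF : ∀ i, (F i).IsTree) : (glueGraph T F a).IsTree :=
  ⟨connected_glueGraph hT.connected fun i => (hF i).connected,
    isAcyclic_glueGraph hT.isAcyclic fun i => (hF i).isAcyclic⟩

theorem connected_induce_glueGraph {S : Set (Σ i, κ i)} {I : Set ι} (hI : (T.induce I).Connected)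
    (hSI : ∀ p ∈ S, p.1 ∈ I) (hS : ∀ i ∈ I, ((F i).induce {x | ⟨i, x⟩ ∈ S}).Connected)
    (ha : ∀ i ∈ I, ∀ j ∈ I, T.Adj i j → ⟨i, a i j⟩ ∈ S) :
    ((glueGraph T F a).induce S).Connected := by
  refine connected_of_forall_fiber_reachable hI (fun p : S => ⟨p.1.1, hSI p p.2⟩) ?_ ?_ ?_
  · rintro ⟨i, hi⟩
    obtain ⟨x, hx⟩ := (hS i hi).nonempty.some
    exact ⟨⟨⟨i, x⟩, hx⟩, rfl⟩
  · rintro ⟨⟨i, x⟩, hx⟩ ⟨⟨j, y⟩, hy⟩ heq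
    obtain rfl : i = j := congrArg Subtype.val heq
    let inclusion : (F i).induce {z | ⟨i, z⟩ ∈ S} →g (glueGraph T F a).induce S :=
      ⟨fun z => ⟨⟨i, z⟩, z.2⟩, fun h => GlueAdj.fiber h⟩
    exact ((hS i (hSI _ hx)).preconnected ⟨x, hx⟩ ⟨y, hy⟩).map inclusion
  · rintro ⟨i, hi⟩ ⟨j, hj⟩ (h : T.Adj i j)
    have hlink : ((glueGraph T F a).induce S).Adj ⟨⟨i, a i j⟩, ha i hi j hj h⟩
        ⟨⟨j, a j i⟩, ha j hj i hi h.symm⟩ := GlueAdj.link h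
    exact ⟨_, _, rfl, rfl, hlink.reachable⟩

end Glue

/-- `G` has treewidth at most `k`. Unlike `treewidth G ≤ k`, this fails when no tree-decomposition
of `G` has bounded width. -/
def HasTreewidthLE {V : Type} (G : SimpleGraph V) (k : ℕ) : Prop :=
  ∃ (ι : Type) (td : TreeDecomp G ι), ∀ i, (td.bag i).card ≤ k + 1

namespace TreeDecomp

variable {V ι : Type} {G : SimpleGraph V}

theorem exists_subset_bag (td : TreeDecomp G ι) {K : Set V} (hK : G.IsClique K)
    (hfin : K.Finite) : ∃ i, K ⊆ td.bag i := by
  induction K, hfin using Set.Finite.induction_on with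
  | empty => exact td.isTree.connected.nonempty.elim fun i => ⟨i, Set.empty_subset _⟩
  | @insert v K hv _ ih =>
    obtain ⟨i, hi⟩ := ih (hK.subset (Set.subset_insert v K))
    obtain ⟨s, hs⟩ := td.bags_cover v
    obtain ⟨j, hj, hgate⟩ := exists_isGate td.isTree.isAcyclic (td.bags_connected v).preconnected
      (td.isTree.connected.preconnected i s) hs
    refine ⟨j, Set.insert_subset hj fun u hu => ?_⟩
    have huv : G.Adj u v := hK (Set.mem_insert_of_mem v hu) (Set.mem_insert v K)
      (ne_of_mem_of_not_mem hu hv)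
    obtain ⟨t, htu, htv⟩ := td.edges_covered huv
    obtain ⟨p, hp⟩ :=
      exists_walk_support_subset ((td.bags_connected u).preconnected ⟨i, hi hu⟩ ⟨t, htu⟩)
    exact hp j (hgate t htv p)

open scoped Classical in
/-- The restriction of a tree-decomposition to the subgraph induced by `X`: every bag is
intersected with `X`. -/
noncomputable def induce (td : TreeDecomp G ι) (X : Set V) : TreeDecomp (G.induce X) ι where
  tree := td.tree
  isTree := td.isTree
  bag i := (td.bag i).subtype (· ∈ X)
  bags_cover v := by simpa only [Finset.mem_subtype] using td.bags_cover v
  edges_covered u v (h : G.Adj u v) := by simpa only [Finset.mem_subtype] using td.edges_covered h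
  bags_connected v := by
    have heq : {i | v ∈ (td.bag i).subtype (· ∈ X)} = {i | (v : V) ∈ td.bag i} :=
      Set.ext fun _ => Finset.mem_subtype
    exact heq ▸ td.bags_connected v

open scoped Classical in
theorem card_bag_induce_le (td : TreeDecomp G ι) (X : Set V) (i : ι) :
    ((td.induce X).bag i).card ≤ (td.bag i).card :=
  (Finset.card_subtype _ _).trans_le (Finset.card_filter_le _ _)

/-- The tree-decomposition of a finite graph with a single bag. -/
def single [Fintype V] (G : SimpleGraph V) : TreeDecomp G Unit where
  tree := ⊥
  isTree := .of_subsingleton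
  bag _ := Finset.univ
  bags_cover v := ⟨(), Finset.mem_univ v⟩
  edges_covered u v _ := ⟨(), Finset.mem_univ u, Finset.mem_univ v⟩
  bags_connected v :=
    have : Nonempty {_i : Unit | v ∈ Finset.univ} := ⟨⟨(), Finset.mem_univ v⟩⟩
    .of_subsingleton

theorem mem_map_bag_iff {X : Set V} (td : TreeDecomp (G.induce X) ι) {i : ι} {v : V} (hv : v ∈ X) :
    v ∈ (td.bag i).map (Function.Embedding.subtype (· ∈ X)) ↔ ⟨v, hv⟩ ∈ td.bag i :=
  Finset.mem_map' (Function.Embedding.subtype (· ∈ X)) (a := ⟨v, hv⟩)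

/-- The tree-decomposition of `G` glued along the tree of `td` from tree-decompositions `F i` of the
subgraphs induced by the bags of `td`. For adjacent nodes `i` and `j` of `td`, the node `a i j` of
`F i` has to contain the intersection of the bags of `i` and `j`. -/
def glue (td : TreeDecomp G ι) {κ : ι → Type}
    (F : ∀ i, TreeDecomp (G.induce (td.bag i : Set V)) (κ i)) (a : ∀ i, ι → κ i)
    (ha : ∀ i j, td.tree.Adj i j → ∀ v (hv : v ∈ td.bag i), v ∈ td.bag j →
      ⟨v, hv⟩ ∈ (F i).bag (a i j)) : TreeDecomp G (Σ i, κ i) where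
  tree := glueGraph td.tree (fun i => (F i).tree) a
  isTree := isTree_glueGraph td.isTree fun i => (F i).isTree
  bag p := ((F p.1).bag p.2).map (Function.Embedding.subtype _)
  bags_cover v := by
    obtain ⟨i, hi⟩ := td.bags_cover v
    obtain ⟨x, hx⟩ := (F i).bags_cover ⟨v, hi⟩
    exact ⟨⟨i, x⟩, Finset.mem_map_of_mem _ hx⟩
  edges_covered u v h := by
    obtain ⟨i, hu, hv⟩ := td.edges_covered h
    obtain ⟨x, hx, hx'⟩ := (F i).edges_covered (u := ⟨u, hu⟩) (v := ⟨v, hv⟩) h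
    exact ⟨⟨i, x⟩, Finset.mem_map_of_mem _ hx, Finset.mem_map_of_mem _ hx'⟩
  bags_connected v := by
    refine connected_induce_glueGraph (td.bags_connected v) ?_ ?_ ?_
    · rintro ⟨i, x⟩ hp
      obtain ⟨w, -, rfl⟩ := Finset.mem_map.mp hp
      exact w.2
    · intro i hi
      have heq : {x | v ∈ ((F i).bag x).map (Function.Embedding.subtype _)} =
          {x | ⟨v, hi⟩ ∈ (F i).bag x} := Set.ext fun x => (F i).mem_map_bag_iff hi
      exact heq ▸ (F i).bags_connected ⟨v, hi⟩
    · exact fun i hi j hj h => ((F i).mem_map_bag_iff hi).mpr (ha i j h v hi hj)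

theorem exists_inter_subset_bag (td : TreeDecomp G ι) {i j : ι} {κ : Type}
    (F : TreeDecomp (G.induce (td.bag i : Set V)) κ)
    (hij : G.IsClique (↑(td.bag i) ∩ ↑(td.bag j) : Set V)) :
    ∃ x, ∀ v (hv : v ∈ td.bag i), v ∈ td.bag j → ⟨v, hv⟩ ∈ F.bag x := by
  obtain ⟨x, hx⟩ := F.exists_subset_bag (K := {v | (v : V) ∈ td.bag j})
    (fun u hu v hv huv => hij ⟨u.2, hu⟩ ⟨v.2, hv⟩ (Subtype.coe_ne_coe.mpr huv)) (Set.toFinite _)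
  exact ⟨x, fun v hv hv' => hx hv'⟩

end TreeDecomp

section Treewidth

variable {V ι : Type} {G : SimpleGraph V} {k : ℕ}

theorem HasTreewidthLE.treewidth_le (h : HasTreewidthLE G k) : treewidth G ≤ k :=
  Nat.sInf_le h

theorem HasTreewidthLE.hasTreewidthLE_treewidth (h : HasTreewidthLE G k) :
    HasTreewidthLE G (treewidth G) :=
  Nat.sInf_mem (s := {k | HasTreewidthLE G k}) ⟨k, h⟩

theorem HasTreewidthLE.mono {l : ℕ} (h : HasTreewidthLE G k) (hkl : k ≤ l) :
    HasTreewidthLE G l := by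
  obtain ⟨ι, td, hcard⟩ := h
  exact ⟨ι, td, fun i => (hcard i).trans (Nat.add_le_add_right hkl 1)⟩

theorem HasTreewidthLE.induce (h : HasTreewidthLE G k) (X : Set V) :
    HasTreewidthLE (G.induce X) k := by
  obtain ⟨ι, td, hcard⟩ := h
  exact ⟨ι, td.induce X, fun i => (td.card_bag_induce_le X i).trans (hcard i)⟩

theorem hasTreewidthLE_treewidth [Finite V] (G : SimpleGraph V) :
    HasTreewidthLE G (treewidth G) := by
  cases nonempty_fintype V
  have hcard : HasTreewidthLE G (Fintype.card V) :=
    ⟨Unit, .single G, fun _ => Nat.le_succ _⟩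
  exact hcard.hasTreewidthLE_treewidth

theorem TreeDecomp.hasTreewidthLE_iff_forall_induce_bag (td : TreeDecomp G ι)
    (hadj : ∀ i j, td.tree.Adj i j → G.IsClique (↑(td.bag i) ∩ ↑(td.bag j) : Set V)) :
    HasTreewidthLE G k ↔ ∀ i, HasTreewidthLE (G.induce (td.bag i : Set V)) k := by
  refine ⟨fun h i => h.induce _, fun h => ?_⟩
  choose κ F hF using h
  have (i : ι) : Nonempty (κ i) := (F i).isTree.connected.nonempty
  choose! a ha using fun i j h => td.exists_inter_subset_bag (F i) (hadj i j h)
  exact ⟨_, td.glue F a ha, fun p => (Finset.card_map _).trans_le (hF p.1 p.2)⟩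

theorem bddAbove_treewidth_induce {ι : Sort*} [Finite V] (G : SimpleGraph V) (X : ι → Set V) :
    BddAbove {k : ℕ | ∃ i, k = treewidth (G.induce (X i))} :=
  ⟨treewidth G, fun _ ⟨i, hi⟩ =>
    hi.trans_le ((hasTreewidthLE_treewidth G).induce (X i)).treewidth_le⟩

theorem treewidth_cliqueSeparatorDecomposition_general (G : SimpleGraph V) (td : TreeDecomp G ι)
    (hadj : ∀ i j : ι, td.tree.Adj i j → G.IsClique (↑(td.bag i) ∩ ↑(td.bag j) : Set V))
    (hbdd : BddAbove {k : ℕ | ∃ i : ι, k = treewidth (G.induce ↑(td.bag i))}) :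
    IsGreatest {k : ℕ | ∃ i : ι, k = treewidth (G.induce ↑(td.bag i))} (treewidth G) := by
  obtain ⟨i₀⟩ := td.isTree.connected.nonempty
  have hne : {k : ℕ | ∃ i : ι, k = treewidth (G.induce ↑(td.bag i))}.Nonempty := ⟨_, i₀, rfl⟩
  obtain ⟨i, hi⟩ := Nat.sSup_mem hne hbdd
  have hG : HasTreewidthLE G (treewidth (G.induce ↑(td.bag i))) :=
    (td.hasTreewidthLE_iff_forall_induce_bag hadj).mpr fun j =>
      (hasTreewidthLE_treewidth _).mono ((le_csSup hbdd ⟨j, rfl⟩).trans_eq hi)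
  have hle (j : ι) : treewidth (G.induce ↑(td.bag j)) ≤ treewidth G :=
    (hG.hasTreewidthLE_treewidth.induce _).treewidth_le
  exact ⟨⟨i, hG.treewidth_le.antisymm (hle i)⟩, fun _ ⟨j, hj⟩ => hj.trans_le (hle j)⟩

end Treewidth

/-- if `td` is a clique-separator decomposition of `G`, then `tw(G)`
is the maximum of `tw(A)` over all atoms `A = G[X]`, `X` a bag of `td`. -/
theorem treewidth_cliqueSeparatorDecomposition {V ι : Type} [Fintype V]
    (G : SimpleGraph V) (td : TreeDecomp G ι)
    (hadj : ∀ i j : ι, td.tree.Adj i j →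
      G.IsClique (↑(td.bag i) ∩ ↑(td.bag j) : Set V) ∧
      IsMinSep G (↑(td.bag i) ∩ ↑(td.bag j) : Set V))
    (hatom : ∀ i : ι, ¬ ∃ T : Set (↑(td.bag i : Set V)),
      (G.induce ↑(td.bag i)).IsClique T ∧ IsSeparator (G.induce ↑(td.bag i)) T) :
    treewidth G = sSup {k : ℕ | ∃ i : ι, k = treewidth (G.induce ↑(td.bag i))} := by
  exact (treewidth_cliqueSeparatorDecomposition_general G td (fun i j h => (hadj i j h).1)
    (bddAbove_treewidth_induce G fun i => td.bag i)).csSup_eq.symm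
end
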